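/- Let n ≥ 1 and m ≥ 2 be integers, and let φ : ℂ[y₁,…,yₙ] → ℂ[x₁,…,xₙ] be the ℂ-algebra homomorphism determined by φ(y₁) = x₁^m and φ(yᵢ) = xᵢ for i ≥ 2. Then for every polynomial g ∈ ℂ[y₁,…,yₙ], the power x₁^{m−1} divides φ(g) in ℂ[x₁,…,xₙ] if and only if y₁ divides g in ℂ[y₁,…,yₙ]. -/

import Mathlib

open MvPolynomial

/-- The `R`-algebra endomorphism of `R[xⱼ]` sending `xᵢ` to `xᵢ ^ m` and fixing all other variables:
the comorphism of the normal form of a covering branched to order `m` along `xᵢ = 0`. -/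
noncomputable def powSubst {σ : Type*} [DecidableEq σ] (R : Type*) [CommSemiring R]
    (i : σ) (m : ℕ) : MvPolynomial σ R →ₐ[R] MvPolynomial σ R :=
  aeval fun j => if j = i then X i ^ m else X j

theorem algHom_sub_algHom_mem_of_forall_X {σ R A : Type*}
    [CommSemiring R] [CommRing A] [Algebra R A]
    {φ ψ : MvPolynomial σ R →ₐ[R] A} {I : Ideal A} (h : ∀ j, φ (X j) - ψ (X j) ∈ I)
    (p : MvPolynomial σ R) : φ p - ψ p ∈ I := by
  have hcomp : (Ideal.Quotient.mkₐ R I).comp φ = (Ideal.Quotient.mkₐ R I).comp ψ :=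
    algHom_ext fun j => Ideal.Quotient.eq.mpr (h j)
  exact Ideal.Quotient.eq.mp (DFunLike.congr_fun hcomp p)

section powSubst

variable {σ R : Type*} [DecidableEq σ]

theorem powSubst_X_self [CommSemiring R] (i : σ) (m : ℕ) :
    powSubst R i m (X i) = X i ^ m := by
  simp [powSubst]

theorem powSubst_X_of_ne [CommSemiring R] {i j : σ} (hj : j ≠ i) (m : ℕ) :
    powSubst R i m (X j) = X j := by
  simp [powSubst, hj]

variable [CommRing R]

-- Modulo `xᵢ`, both `xᵢ ^ m` and `xᵢ` vanish, so the substitution becomes the identity.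
theorem X_dvd_powSubst_sub_self (i : σ) {m : ℕ} (hm : m ≠ 0) (g : MvPolynomial σ R) :
    X i ∣ powSubst R i m g - g := by
  rw [← Ideal.mem_span_singleton]
  refine algHom_sub_algHom_mem_of_forall_X (ψ := AlgHom.id R _) (fun j => ?_) g
  rw [Ideal.mem_span_singleton, AlgHom.id_apply]
  obtain rfl | hj := eq_or_ne j i
  · rw [powSubst_X_self]
    exact dvd_sub (dvd_pow_self _ hm) dvd_rfl
  · rw [powSubst_X_of_ne hj, sub_self]
    exact dvd_zero _

theorem X_dvd_powSubst_iff (i : σ) {m : ℕ} (hm : m ≠ 0) (g : MvPolynomial σ R) :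
    X i ∣ powSubst R i m g ↔ X i ∣ g :=
  dvd_iff_dvd_of_dvd_sub (X_dvd_powSubst_sub_self i hm g)

theorem stmt_0_general (i : σ) {k m : ℕ} (hk : k ≠ 0) (hkm : k ≤ m) (g : MvPolynomial σ R) :
    X i ^ k ∣ powSubst R i m g ↔ X i ∣ g := by
  constructor
  · intro h
    have hm : m ≠ 0 := by lia
    exact (X_dvd_powSubst_iff i hm g).mp ((dvd_pow_self _ hk).trans h)
  · intro h
    have hpow : X i ^ m ∣ powSubst R i m g := powSubst_X_self (R := R) i m ▸ map_dvd _ h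
    exact (pow_dvd_pow _ hkm).trans hpow

end powSubst

/-- local content of Lemma 2.3.2.
Let `n ≥ 1`, `m ≥ 2`, and let `φ : ℂ[y₁,…,yₙ] → ℂ[x₁,…,xₙ]` be the ℂ-algebra map
with `φ(y₁) = x₁^m` and `φ(yᵢ) = xᵢ` for `i ≥ 2`.  Then `x₁^(m-1) ∣ φ(g)` iff `y₁ ∣ g`. -/
theorem stmt_0 (n m : ℕ) (hn : 1 ≤ n) (hm : 2 ≤ m)
    (φ : MvPolynomial (Fin n) ℂ →ₐ[ℂ] MvPolynomial (Fin n) ℂ)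
    (hφ : φ = aeval (fun i : Fin n =>
      if i = (⟨0, hn⟩ : Fin n) then (X (⟨0, hn⟩ : Fin n)) ^ m else X i))
    (g : MvPolynomial (Fin n) ℂ) :
    (X (⟨0, hn⟩ : Fin n)) ^ (m - 1) ∣ φ g ↔ (X (⟨0, hn⟩ : Fin n)) ∣ g := by
  subst hφ
  exact stmt_0_general _ (by lia) (Nat.sub_le m 1) g
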